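/- For all integers r,q ≥ 1 and every tag L ∈ {A,B} and indices 0 ≤ j ≤ r, 0 ≤ k ≤ q with (L,j,k) ≠ (A,0,0): σ_{rq} maps the axis position of the label L^j_k to the meander position of L^j_k. That is, the two labelings of the vertices — by axis positions and by meander positions — are consistent under σ_{rq}. -/

import Mathlib

/-- Morse numbers `i_j` of a permutation `σ` of `{1,…,N}` (extended to `ℕ`),
via the recursion `i_1 = 0`,
`i_{j+1} = i_j + (-1)^(j+1) * sign (σ⁻¹(j+1) - σ⁻¹(j))`. -/
def morse (σ : Equiv.Perm ℕ) : ℕ → ℤ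
  | 0 => 0
  | 1 => 0
  | (j+2) => morse σ (j+1) +
      (-1)^(j+2) * Int.sign ((σ.symm (j+2) : ℤ) - (σ.symm (j+1) : ℤ))

/-- Zero numbers `z_{j k}`, recursion in the first index `j`, second index `k` fixed:
`z_{1k} = 0`, `z_{kk} = i_k`, `z_{k+1,k} = min (i_k, i_{k+1})`, and otherwise
`z_{j+1,k} = z_{jk} + ((-1)^(j+1)/2) * (sign (σ⁻¹(j+1) - σ⁻¹(k)) - sign (σ⁻¹(j) - σ⁻¹(k)))`. -/
def zrec (σ : Equiv.Perm ℕ) (k : ℕ) : ℕ → ℤ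
  | 0 => 0
  | 1 => 0
  | (j+2) =>
      if j+2 = k then morse σ k
      else if j+1 = k then min (morse σ k) (morse σ (k+1))
      else zrec σ k (j+1) +
        ((-1)^(j+2) * (Int.sign ((σ.symm (j+2) : ℤ) - (σ.symm k : ℤ))
          - Int.sign ((σ.symm (j+1) : ℤ) - (σ.symm k : ℤ)))) / 2

/-- The zero number `z_{m n}`. -/
def zfun (σ : Equiv.Perm ℕ) (m n : ℕ) : ℤ := zrec σ n m

/-- The connection digraph of a dissipative Morse permutation `σ` of `{1,…,N}`:
an edge `m ⤳ n` iff `i_m = i_n + 1` and no `w` strictly between `m` and `n`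
blocks, i.e. satisfies `z_{mw} = z_{wn} = z_{mn}`. -/
def hasEdge (N : ℕ) (σ : Equiv.Perm ℕ) (m n : ℕ) : Prop :=
  1 ≤ m ∧ m ≤ N ∧ 1 ≤ n ∧ n ≤ N ∧
  morse σ m = morse σ n + 1 ∧
  ¬ ∃ w : ℕ, min m n < w ∧ w < max m n ∧
      zfun σ m w = zfun σ w n ∧ zfun σ w n = zfun σ m n

/-- A dissipative permutation of `{1,…,N}`. -/
def Dissipative (N : ℕ) (σ : Equiv.Perm ℕ) : Prop :=
  Set.BijOn σ (Set.Icc 1 N) (Set.Icc 1 N) ∧ σ 1 = 1 ∧ σ N = N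

/-- The Morse property: all Morse numbers are nonnegative. -/
def MorseProp (N : ℕ) (σ : Equiv.Perm ℕ) : Prop :=
  ∀ j, 1 ≤ j → j ≤ N → 0 ≤ morse σ j

/-- Morse counts `μ(i) = #{j ∈ {1,…,N} : i_j = i}`. -/
def morseCount (N : ℕ) (σ : Equiv.Perm ℕ) (i : ℤ) : ℕ :=
  ((Finset.Icc 1 N).filter (fun j => morse σ j = i)).card

/-- The primitive 3-nose permutation `σ_{rq}` of `{1,…,N}`, `N = 2(r+1)(q+1)-1`,
characterized by its defining relations, extended to a permutation of `ℕ`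
fixing everything outside `{1,…,N}`. -/
def SigmaRQ (r q : ℕ) (σ : Equiv.Perm ℕ) : Prop :=
  (∀ a, a ∉ Set.Icc 1 (2*(r+1)*(q+1) - 1) → σ a = a) ∧
  (∀ j k, j ≤ r → k ≤ q →
    σ (2*((q+1)*j+k)+1) = 2*(j+(r+1)*k)+1) ∧
  (∀ j k, j ≤ r → k ≤ q → ¬(j = 0 ∧ k = 0) →
    σ (2*((q+1)*(r-j)+(q-k)+1)) = 2*(j+(r+1)*k))

/-- Tags `A`, `B` of equilibrium labels `A^j_k`, `B^j_k`. -/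
inductive Tag | A | B
deriving DecidableEq

/-- The axis position (`h_1`-position) of the label `L^j_k` for parameters `(r,q)`. -/
def axisPos (r q : ℕ) : Tag → ℕ → ℕ → ℕ
  | Tag.A, j, k => if Odd j then (q+1)*(j-1)+k+1 else (q+1)*(2*r+1-j)+(q-k)+1
  | Tag.B, j, k => if Odd j then (q+1)*j+(q-k)+1 else (q+1)*(2*r-j)+k+1

/-- The meander position (`h_0`-position) of the label `L^j_k` for parameters `(r,q)`. -/
def meanderPos (r q : ℕ) : Tag → ℕ → ℕ → ℕ
  | Tag.A, j, k => if Odd k then (r+1)*(2*q+1-k)+(2*r+1-j) else (r+1)*k+j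
  | Tag.B, j, k => if Odd k then (r+1)*(2*q+1-k)+j else (r+1)*(k+1)+(r-j)

/-- The suspension `σ̃` of a dissipative permutation `σ` of `{1,…,N}`:
`σ̃(1) = 1`, `σ̃(N+2) = N+2`, and `σ̃(a+1) = N+2 - σ(a)` for `1 ≤ a ≤ N`. -/
def IsSuspension (N : ℕ) (σ σt : Equiv.Perm ℕ) : Prop :=
  σt 1 = 1 ∧ σt (N+2) = N+2 ∧ ∀ a, 1 ≤ a → a ≤ N → σt (a+1) = N+2 - σ a

/-- The label `A^0_0` is the distinguished (formal) vertex `⋆`. -/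
def IsStar (L : Tag) (j k : ℕ) : Prop := L = Tag.A ∧ j = 0 ∧ k = 0

/-- Tag swap `A ↔ B`, used by the reversor. -/
def tagSwap : Tag → Tag
  | Tag.A => Tag.B
  | Tag.B => Tag.A

/-!
On odd positions `σ_{rq}` transposes the grid `{0, …, r} × {0, …, q}`, and on even positions it does
so after reversing both coordinates. The label `L^j_k` has even positions exactly when
`L = A ↔ Even (j + k)`. Both orders run through the labels back and forth, and folding each index in
half straightens these runs: a label with even positions is the grid point
`(halfFold r j, halfFold q k)`, one with odd positions is `(r - halfFold r j, halfFold q k)`.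
-/

/-- The entry `halfFold n j` of `{0, …, n}` obtained from `j ≤ n` by folding the list `0, …, n` in
half: the even entries `0, 2, 4, …` go to `0, 1, 2, …` and the odd entries `1, 3, 5, …` go to
`n, n - 1, n - 2, …`. It turns the indices of the labels `L^j_k` into the indices used in the
defining relations of `σ_{rq}`. -/
def halfFold (n j : ℕ) : ℕ := if Even j then j / 2 else n - j / 2

section Fold

variable {n j : ℕ}

theorem two_mul_halfFold_of_even (hj : Even j) : 2 * halfFold n j = j := by
  rw [halfFold, if_pos hj, Nat.two_mul_div_two_of_even hj]

theorem two_mul_halfFold_of_odd (hj : Odd j) : 2 * halfFold n j = 2 * n + 1 - j := by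
  rw [halfFold, if_neg (Nat.not_even_iff_odd.mpr hj)]
  have := Nat.two_mul_div_two_add_one_of_odd hj
  omega

theorem two_mul_sub_halfFold_of_even (hj : Even j) : 2 * (n - halfFold n j) = 2 * n - j := by
  rw [Nat.mul_sub, two_mul_halfFold_of_even hj]

theorem two_mul_sub_halfFold_of_odd (hj : Odd j) (hjn : j ≤ n) :
    2 * (n - halfFold n j) = j - 1 := by
  rw [Nat.mul_sub, two_mul_halfFold_of_odd hj]
  have := hj.pos
  omega

theorem halfFold_le (hjn : j ≤ n) : halfFold n j ≤ n := by
  unfold halfFold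
  split_ifs <;> omega

theorem halfFold_eq_zero_iff (hjn : j ≤ n) : halfFold n j = 0 ↔ j = 0 := by
  unfold halfFold
  split_ifs with hj
  · have := Nat.two_mul_div_two_of_even hj
    omega
  · have := (Nat.not_even_iff_odd.mp hj).pos
    omega

end Fold

section Positions

variable {r q j k : ℕ}

theorem axisPos_eq_add_offset (L : Tag) (hj : j ≤ r) (hk : k ≤ q) :
    axisPos r q L j k =
      (q + 1) * (2 * (r - halfFold r j)) + if L = Tag.A ↔ Odd j then k + 1 else 2 * q + 2 - k := by
  rcases Nat.even_or_odd j with hj_even | hj_odd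
  · have hj_not_odd := Nat.not_odd_iff_even.mpr hj_even
    rw [two_mul_sub_halfFold_of_even hj_even]
    cases L
    · have : 2 * r + 1 - j = (2 * r - j) + 1 := by omega
      simp only [axisPos, hj_not_odd, iff_false, not_true_eq_false, if_false, this, mul_add_one]
      omega
    · simp [axisPos, hj_not_odd, add_assoc]
  · rw [two_mul_sub_halfFold_of_odd hj_odd hj]
    cases L
    · simp [axisPos, hj_odd, add_assoc]
    · obtain ⟨i, rfl⟩ := hj_odd
      simp only [axisPos, odd_two_mul_add_one, if_true, reduceCtorEq, iff_true, if_false,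
        Nat.add_sub_cancel, mul_add_one]
      omega

theorem meanderPos_eq_add_offset (L : Tag) (hj : j ≤ r) :
    meanderPos r q L j k =
      (r + 1) * (2 * halfFold q k) + if L = Tag.A ↔ Even k then j else 2 * r + 1 - j := by
  rcases Nat.even_or_odd k with hk_even | hk_odd
  · have hk_not_odd := Nat.not_odd_iff_even.mpr hk_even
    rw [two_mul_halfFold_of_even hk_even]
    cases L
    · simp [meanderPos, hk_even, hk_not_odd]
    · simp only [meanderPos, hk_even, hk_not_odd, if_false, reduceCtorEq, iff_true, mul_add_one]
      omega
  · have hk_not_even := Nat.not_even_iff_odd.mpr hk_odd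
    rw [two_mul_halfFold_of_odd hk_odd]
    cases L <;> simp [meanderPos, hk_odd, hk_not_even]

variable {L : Tag}

theorem axisPos_of_iff_even (hj : j ≤ r) (hk : k ≤ q) (h : L = Tag.A ↔ Even (j + k)) :
    axisPos r q L j k = 2 * ((q + 1) * (r - halfFold r j) + (q - halfFold q k) + 1) := by
  have offset : (if L = Tag.A ↔ Odd j then k + 1 else 2 * q + 2 - k) =
      2 * (q - halfFold q k) + 2 := by
    rcases Nat.even_or_odd k with hk_even | hk_odd
    · rw [two_mul_sub_halfFold_of_even hk_even, if_neg (by grind)]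
      omega
    · rw [two_mul_sub_halfFold_of_odd hk_odd hk, if_pos (by grind)]
      have := hk_odd.pos
      omega
  rw [axisPos_eq_add_offset L hj hk, offset]
  ring

theorem axisPos_of_iff_odd (hj : j ≤ r) (hk : k ≤ q) (h : L = Tag.A ↔ Odd (j + k)) :
    axisPos r q L j k = 2 * ((q + 1) * (r - halfFold r j) + halfFold q k) + 1 := by
  have offset : (if L = Tag.A ↔ Odd j then k + 1 else 2 * q + 2 - k) = 2 * halfFold q k + 1 := by
    rcases Nat.even_or_odd k with hk_even | hk_odd
    · rw [two_mul_halfFold_of_even hk_even, if_pos (by grind)]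
    · rw [two_mul_halfFold_of_odd hk_odd, if_neg (by grind)]
      omega
  rw [axisPos_eq_add_offset L hj hk, offset]
  ring

theorem meanderPos_of_iff_even (hj : j ≤ r) (h : L = Tag.A ↔ Even (j + k)) :
    meanderPos r q L j k = 2 * (halfFold r j + (r + 1) * halfFold q k) := by
  have offset : (if L = Tag.A ↔ Even k then j else 2 * r + 1 - j) = 2 * halfFold r j := by
    rcases Nat.even_or_odd j with hj_even | hj_odd
    · rw [two_mul_halfFold_of_even hj_even, if_pos (by grind)]
    · rw [two_mul_halfFold_of_odd hj_odd, if_neg (by grind)]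
  rw [meanderPos_eq_add_offset L hj, offset]
  ring

theorem meanderPos_of_iff_odd (hj : j ≤ r) (h : L = Tag.A ↔ Odd (j + k)) :
    meanderPos r q L j k = 2 * ((r - halfFold r j) + (r + 1) * halfFold q k) + 1 := by
  have offset : (if L = Tag.A ↔ Even k then j else 2 * r + 1 - j) = 2 * (r - halfFold r j) + 1 := by
    rcases Nat.even_or_odd j with hj_even | hj_odd
    · rw [two_mul_sub_halfFold_of_even hj_even, if_neg (by grind)]
      omega
    · rw [two_mul_sub_halfFold_of_odd hj_odd hj, if_pos (by grind)]
      have := hj_odd.pos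
      omega
  rw [meanderPos_eq_add_offset L hj, offset]
  ring

end Positions

/-- consistency of the two labelings: `σ_{rq}` maps the axis
position of each label `L^j_k ≠ A^0_0` to its meander position. -/
theorem stmt_6 (r q : ℕ) (hr : 1 ≤ r) (hq : 1 ≤ q)
    (σ : Equiv.Perm ℕ) (hσ : SigmaRQ r q σ) :
    ∀ (L : Tag) (j k : ℕ), j ≤ r → k ≤ q → ¬(L = Tag.A ∧ j = 0 ∧ k = 0) →
      σ (axisPos r q L j k) = meanderPos r q L j k := by
  obtain ⟨-, odd_relation, even_relation⟩ := hσ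
  intro L j k hj hk h_star
  by_cases h : L = Tag.A ↔ Even (j + k)
  · have h_origin : ¬(halfFold r j = 0 ∧ halfFold q k = 0) := by
      rw [halfFold_eq_zero_iff hj, halfFold_eq_zero_iff hk]
      rintro ⟨rfl, rfl⟩
      exact h_star ⟨h.mpr Even.zero, rfl, rfl⟩
    rw [axisPos_of_iff_even hj hk h, meanderPos_of_iff_even hj h]
    exact even_relation _ _ (halfFold_le hj) (halfFold_le hk) h_origin
  · have h_odd : L = Tag.A ↔ Odd (j + k) := by
      rw [← Nat.not_even_iff_odd]
      tauto
    rw [axisPos_of_iff_odd hj hk h_odd, meanderPos_of_iff_odd hj h_odd]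
    exact odd_relation _ _ (Nat.sub_le _ _) (halfFold_le hk)
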